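/- Every solution of the dichotomous system converges to a multiple of the growing mode: Under the hypotheses of the previous statement (β > 0, γ ∈ (1/2,1), R integrable), there is a linear functional Φ : ℂ² → ℂ with one-dimensional kernel such that for every f ∈ ℂ², the solution u(·,f) with u(0,f) = f satisfies u(x,f) = exp(β x^{1−γ}/(1−γ)) (Φ(f) e₊ + o(1)) as x → +∞; moreover Φ(f) = ⟨ f + ∫₀^∞ exp(−β x^{1−γ}/(1−γ)) R(x) u(x,f) dx , e₊ ⟩. -/

import Mathlib

open MeasureTheory Real Filter Topology

theorem absolutelyContinuousOnInterval_const_add_integral {a b c : ℝ} {p : ℝ → ℝ}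
    (hp : IntervalIntegrable p volume a b) :
    AbsolutelyContinuousOnInterval (fun y => c + ∫ t in a..y, p t) a b := by
  have hc : AbsolutelyContinuousOnInterval (fun _ : ℝ => c) a b :=
    (contDiff_const.contDiffOn).absolutelyContinuousOnInterval
  exact hc.add (hp.absolutelyContinuousOnInterval_intervalIntegral (by simp))

/-- Product rule, in integrated form, for two real primitives of integrable functions. -/
theorem mul_sub_mul_eq_integral {a b : ℝ} {p q P W : ℝ → ℝ}
    (hp : IntervalIntegrable p volume a b) (hq : IntervalIntegrable q volume a b)
    (hP : ∀ y ∈ Set.uIcc a b, P y = P a + ∫ t in a..y, p t)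
    (hW : ∀ y ∈ Set.uIcc a b, W y = W a + ∫ t in a..y, q t) :
    P b * W b - P a * W a = ∫ t in a..b, (p t * W t + P t * q t) := by
  have key := AbsolutelyContinuousOnInterval.integral_deriv_mul_eq_sub
    (absolutelyContinuousOnInterval_const_add_integral (c := P a) hp)
    (absolutelyContinuousOnInterval_const_add_integral (c := W a) hq)
  rw [hP b (by simp), hW b (by simp)]
  simp only [intervalIntegral.integral_same, add_zero] at key
  rw [← key]
  apply intervalIntegral.integral_congr_ae
  filter_upwards [hp.ae_hasDerivAt_integral, hq.ae_hasDerivAt_integral] with x h1 h2 hx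
  have hx' := Set.uIoc_subset_uIcc hx
  rw [((h1 hx' a (by simp)).const_add (P a)).deriv, ((h2 hx' a (by simp)).const_add (W a)).deriv,
    ← hP x hx', ← hW x hx']

/-- Product rule, in integrated form, for a real and a complex primitive. -/
theorem ofReal_mul_sub_mul_eq_integral {a b : ℝ} {p P : ℝ → ℝ} {q W : ℝ → ℂ}
    (hp : IntervalIntegrable p volume a b) (hq : IntervalIntegrable q volume a b)
    (hP : ∀ y ∈ Set.uIcc a b, P y = P a + ∫ t in a..y, p t)
    (hW : ∀ y ∈ Set.uIcc a b, W y = W a + ∫ t in a..y, q t) :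
    (P b : ℂ) * W b - P a * W a = ∫ t in a..b, ((p t : ℂ) * W t + P t * q t) := by
  have hqy : ∀ y ∈ Set.uIcc a b, IntervalIntegrable q volume a y := fun y hy =>
    hq.mono_set (Set.uIcc_subset_uIcc_left hy)
  have hPc : ContinuousOn P (Set.uIcc a b) :=
    (absolutelyContinuousOnInterval_const_add_integral (c := P a) hp).continuousOn.congr hP
  have hWc : ContinuousOn W (Set.uIcc a b) :=
    (continuousOn_const.add (intervalIntegral.continuousOn_primitive_interval' hq (by simp))).congr
      hW
  have hint : IntervalIntegrable (fun t => (p t : ℂ) * W t + P t * q t) volume a b :=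
    (IntervalIntegrable.mul_continuousOn ⟨hp.1.ofReal, hp.2.ofReal⟩ hWc).add
      (hq.continuousOn_mul (Complex.continuous_ofReal.comp_continuousOn hPc))
  have hre := mul_sub_mul_eq_integral (W := fun t => (W t).re) (q := fun t => (q t).re) hp
    ⟨hq.1.re, hq.2.re⟩ hP (fun y hy => by
      rw [hW y hy, Complex.add_re]
      congr 1
      exact (Complex.reCLM.intervalIntegral_comp_comm (hqy y hy)).symm)
  have him := mul_sub_mul_eq_integral (W := fun t => (W t).im) (q := fun t => (q t).im) hp
    ⟨hq.1.im, hq.2.im⟩ hP (fun y hy => by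
      rw [hW y hy, Complex.add_im]
      congr 1
      exact (Complex.imCLM.intervalIntegral_comp_comm (hqy y hy)).symm)
  apply Complex.ext
  · rw [show (∫ t in a..b, ((p t : ℂ) * W t + P t * q t)).re = _ from
      (Complex.reCLM.intervalIntegral_comp_comm hint).symm]
    simpa using hre
  · rw [show (∫ t in a..b, ((p t : ℂ) * W t + P t * q t)).im = _ from
      (Complex.imCLM.intervalIntegral_comp_comm hint).symm]
    simpa using him

/-- The phase `β x^{1-γ} / (1-γ)`. -/
noncomputable def phase (β γ x : ℝ) : ℝ := β * x ^ (1 - γ) / (1 - γ)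

theorem continuous_phase {β γ : ℝ} (hγ : γ < 1) : Continuous (phase β γ) := by
  unfold phase
  have : Continuous fun x : ℝ => x ^ (1 - γ) := Real.continuous_rpow_const (by linarith)
  fun_prop

theorem hasDerivAt_phase {β γ x : ℝ} (hγ : γ < 1) (hx : 0 < x) :
    HasDerivAt (phase β γ) (β / x ^ γ) x := by
  have h := ((Real.hasDerivAt_rpow_const (p := 1 - γ) (Or.inl hx.ne')).const_mul β).div_const (1 - γ)
  refine h.congr_deriv ?_
  have : 1 - γ ≠ 0 := by linarith
  rw [show 1 - γ - 1 = -γ by ring, Real.rpow_neg hx.le]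
  field_simp

theorem intervalIntegrable_div_rpow {β γ x y : ℝ} (hγ : γ < 1) (hx : 0 ≤ x) (hy : 0 ≤ y) :
    IntervalIntegrable (fun t : ℝ => β / t ^ γ) volume x y := by
  have h := (intervalIntegral.intervalIntegrable_rpow' (a := x) (b := y) (r := -γ)
    (by linarith)).const_mul β
  refine h.congr fun t ht => ?_
  have ht0 : 0 ≤ t := (le_min hx hy).trans (Set.uIoc_subset_uIcc ht).1
  simp only [Real.rpow_neg ht0, div_eq_mul_inv]

theorem phase_monotoneOn {β γ : ℝ} (hβ : 0 < β) (hγ : γ < 1) :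
    MonotoneOn (phase β γ) (Set.Ici 0) := by
  intro x hx y hy hxy
  have hx : 0 ≤ x := hx
  have : 0 < 1 - γ := by linarith
  unfold phase
  gcongr

theorem tendsto_phase {β γ : ℝ} (hβ : 0 < β) (hγ : γ < 1) :
    Tendsto (phase β γ) atTop atTop :=
  ((tendsto_rpow_atTop (by linarith)).const_mul_atTop hβ).atTop_div_const (by linarith)

theorem intervalIntegrable_exp_phase_deriv {β γ x y : ℝ} (s : ℝ) (hγ : γ < 1) (hx : 0 ≤ x)
    (hy : 0 ≤ y) :
    IntervalIntegrable (fun t => Real.exp (-(s * phase β γ t)) * -(s * (β / t ^ γ))) volume x y := by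
  have hc : Continuous fun t => Real.exp (-(s * phase β γ t)) := by
    have := continuous_phase (β := β) hγ
    fun_prop
  exact ((intervalIntegrable_div_rpow hγ hx hy).const_mul s).neg.continuousOn_mul hc.continuousOn

theorem exp_phase_eq_add_integral {β γ x y : ℝ} (s : ℝ) (hγ : γ < 1) (hx : 0 ≤ x) (hy : 0 ≤ y) :
    Real.exp (-(s * phase β γ y)) = Real.exp (-(s * phase β γ x)) +
      ∫ t in x..y, Real.exp (-(s * phase β γ t)) * -(s * (β / t ^ γ)) := by
  have hc : Continuous fun t => Real.exp (-(s * phase β γ t)) := by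
    have := continuous_phase (β := β) hγ
    fun_prop
  rw [intervalIntegral.integral_eq_sub_of_hasDeriv_right hc.continuousOn (fun t ht => ?_)
    (intervalIntegrable_exp_phase_deriv s hγ hx hy)]
  · ring
  · have ht0 : 0 < t := (le_min hx hy).trans_lt ht.1
    exact (((hasDerivAt_phase hγ ht0).const_mul s).neg.exp).hasDerivWithinAt

/-- Variation of constants for a scalar equation `W' = s (β / t^γ) W + r`. -/
theorem exp_phase_mul_sub_eq_integral {β γ x y : ℝ} (s : ℝ) (hγ : γ < 1) (hx : 0 ≤ x)
    (hy : 0 ≤ y) {W r : ℝ → ℂ}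
    (hint : IntervalIntegrable (fun t => ((s * (β / t ^ γ) : ℝ) : ℂ) * W t + r t) volume x y)
    (hW : ∀ z ∈ Set.uIcc x y, W z = W x + ∫ t in x..z, (((s * (β / t ^ γ) : ℝ) : ℂ) * W t + r t)) :
    (Real.exp (-(s * phase β γ y)) : ℂ) * W y - (Real.exp (-(s * phase β γ x)) : ℂ) * W x =
      ∫ t in x..y, (Real.exp (-(s * phase β γ t)) : ℂ) * r t := by
  have h := ofReal_mul_sub_mul_eq_integral (P := fun t => Real.exp (-(s * phase β γ t)))
    (intervalIntegrable_exp_phase_deriv (β := β) s hγ hx hy) hint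
    (fun z hz => exp_phase_eq_add_integral s hγ hx ((le_min hx hy).trans hz.1)) hW
  rw [h]
  congr 1
  ext t
  push_cast
  ring

/-- A function dominated by a constant plus a small integral of itself is bounded. -/
theorem le_two_mul_of_le_add_abs_integral {x y c : ℝ} {N m : ℝ → ℝ}
    (hN : ∀ t, 0 ≤ N t) (hm0 : ∀ t, 0 ≤ m t) (hNint : IntervalIntegrable N volume x y)
    (hN2 : |∫ t in x..y, N t| ≤ 1 / 2) (hm : ContinuousOn m (Set.uIcc x y))
    (h : ∀ r ∈ Set.uIcc x y, m r ≤ c + |∫ t in x..r, N t * m t|) :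
    ∀ r ∈ Set.uIcc x y, m r ≤ 2 * c := by
  obtain ⟨r, hr, hmax⟩ := isCompact_uIcc.exists_isMaxOn Set.nonempty_uIcc hm
  have hmr : m r ≤ c + 1 / 2 * m r := by
    refine (h r hr).trans ?_
    gcongr
    have h1 : |∫ t in x..r, N t * m t| ≤ |∫ t in x..r, N t * m r| := by
      rw [← Real.norm_eq_abs]
      refine intervalIntegral.norm_integral_le_abs_of_norm_le ?_ ?_
      · filter_upwards [ae_restrict_mem measurableSet_uIoc] with t ht
        rw [Real.norm_of_nonneg (mul_nonneg (hN t) (hm0 t))]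
        exact mul_le_mul_of_nonneg_left
          (hmax ((Set.uIcc_subset_uIcc_left hr) (Set.uIoc_subset_uIcc ht))) (hN t)
      · exact (hNint.mono_set (Set.uIcc_subset_uIcc_left hr)).mul_const _
    refine h1.trans ?_
    rw [intervalIntegral.integral_mul_const, abs_mul, abs_of_nonneg (hm0 r)]
    refine mul_le_mul_of_nonneg_right (le_trans ?_ hN2) (hm0 r)
    exact intervalIntegral.abs_integral_mono_interval
      (Set.uIoc_subset_uIoc_of_uIcc_subset_uIcc (Set.uIcc_subset_uIcc_left hr))
      (Eventually.of_forall hN) hNint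
  intro z hz
  have : m z ≤ m r := hmax hz
  linarith

/-- The sum of the norms of the entries of a matrix. -/
noncomputable def entryNorm (A : Matrix (Fin 2) (Fin 2) ℂ) : ℝ := ∑ i, ∑ j, ‖A i j‖

theorem entryNorm_nonneg (A : Matrix (Fin 2) (Fin 2) ℂ) : 0 ≤ entryNorm A := by
  unfold entryNorm
  positivity

theorem norm_mulVec_le (A : Matrix (Fin 2) (Fin 2) ℂ) (v : Fin 2 → ℂ) :
    ‖A.mulVec v‖ ≤ entryNorm A * ‖v‖ := by
  refine (pi_norm_le_iff_of_nonneg (mul_nonneg (entryNorm_nonneg A) (norm_nonneg v))).2 fun i => ?_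
  calc ‖A.mulVec v i‖ ≤ ∑ j, ‖A i j * v j‖ := by
        rw [show A.mulVec v i = ∑ j, A i j * v j from rfl]
        exact norm_sum_le _ _
    _ ≤ ∑ j, ‖A i j‖ * ‖v‖ := by
        refine Finset.sum_le_sum fun j _ => ?_
        rw [norm_mul]
        exact mul_le_mul_of_nonneg_left (norm_le_pi_norm v j) (norm_nonneg _)
    _ = (∑ j, ‖A i j‖) * ‖v‖ := by rw [Finset.sum_mul]
    _ ≤ entryNorm A * ‖v‖ := by
        refine mul_le_mul_of_nonneg_right ?_ (norm_nonneg v)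
        exact Finset.single_le_sum (f := fun i => ∑ j, ‖A i j‖)
          (fun i _ => Finset.sum_nonneg fun j _ => norm_nonneg _) (Finset.mem_univ i)

theorem continuousOn_primitive_Ici {E : Type*} [NormedAddCommGroup E] [NormedSpace ℝ E]
    {g : ℝ → E} (hg : ∀ x y : ℝ, 0 ≤ x → 0 ≤ y → IntervalIntegrable g volume x y) {x₀ : ℝ}
    (hx₀ : 0 ≤ x₀) : ContinuousOn (fun y => ∫ t in x₀..y, g t) (Set.Ici 0) := by
  intro y hy
  have hy : 0 ≤ y := hy
  have hX : 0 ≤ x₀ + y + 1 := by linarith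
  have h := intervalIntegral.continuousOn_primitive_interval' (hg 0 (x₀ + y + 1) le_rfl hX)
    (a := x₀) (by rw [Set.uIcc_of_le hX]; constructor <;> linarith)
  rw [Set.uIcc_of_le hX] at h
  refine (h y ⟨hy, by linarith⟩).mono_of_mem_nhdsWithin ?_
  rw [← Set.Ici_inter_Iic]
  exact inter_mem_nhdsWithin _ (Iic_mem_nhds (by linarith))

/-- `u` solves `u' = A u` on `[0, ∞)` in integrated form. -/
def IsIntegralSolution (A : ℝ → Matrix (Fin 2) (Fin 2) ℂ) (u : ℝ → Fin 2 → ℂ) : Prop :=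
  ∀ x y : ℝ, 0 ≤ x → 0 ≤ y → u y = u x + ∫ t in x..y, (A t).mulVec (u t)

/-- All entries of `A` are integrable on compact subintervals of `[0, ∞)`. -/
def EntriesLocallyIntegrable (A : ℝ → Matrix (Fin 2) (Fin 2) ℂ) : Prop :=
  ∀ x y : ℝ, 0 ≤ x → 0 ≤ y → ∀ i j, IntervalIntegrable (fun t => A t i j) volume x y

theorem intervalIntegrable_entryNorm {A : ℝ → Matrix (Fin 2) (Fin 2) ℂ} {x y : ℝ}
    (hA : ∀ i j, IntervalIntegrable (fun t => A t i j) volume x y) :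
    IntervalIntegrable (fun t => entryNorm (A t)) volume x y := by
  simp only [entryNorm, Fin.sum_univ_two]
  exact ((hA 0 0).norm.add (hA 0 1).norm).add ((hA 1 0).norm.add (hA 1 1).norm)

theorem intervalIntegrable_mulVec {A : ℝ → Matrix (Fin 2) (Fin 2) ℂ} {u : ℝ → Fin 2 → ℂ} {x y : ℝ}
    (hA : ∀ i j, IntervalIntegrable (fun t => A t i j) volume x y)
    (hu : ContinuousOn u (Set.uIcc x y)) (i : Fin 2) :
    IntervalIntegrable (fun t => (A t).mulVec (u t) i) volume x y := by
  simp only [Matrix.mulVec, dotProduct, Fin.sum_univ_two]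
  have hc : ∀ j, ContinuousOn (fun t => u t j) (Set.uIcc x y) := continuousOn_pi.1 hu
  exact ((hA i 0).mul_continuousOn (hc 0)).add ((hA i 1).mul_continuousOn (hc 1))

theorem intervalIntegrable_of_eval {g : ℝ → Fin 2 → ℂ} {x y : ℝ}
    (hg : ∀ i, IntervalIntegrable (fun t => g t i) volume x y) : IntervalIntegrable g volume x y :=
  ⟨Integrable.of_eval fun i => (hg i).1, Integrable.of_eval fun i => (hg i).2⟩

namespace IsIntegralSolution

variable {A : ℝ → Matrix (Fin 2) (Fin 2) ℂ} {u w : ℝ → Fin 2 → ℂ}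

/-- The integrand of an integral solution is automatically integrable: otherwise all the junk
values of the integral force `u` to be constant, and then the integrand is integrable. -/
theorem intervalIntegrable (hu : IsIntegralSolution A u) (hA : EntriesLocallyIntegrable A)
    {x y : ℝ} (hx : 0 ≤ x) (hy : 0 ≤ y) :
    IntervalIntegrable (fun t => (A t).mulVec (u t)) volume x y := by
  by_contra hxy
  have heq : ∀ {a b : ℝ}, 0 ≤ a → 0 ≤ b →
      ¬ IntervalIntegrable (fun t => (A t).mulVec (u t)) volume a b → u b = u a := by
    intro a b ha hb hab
    rw [hu a b ha hb, intervalIntegral.integral_undef hab, add_zero]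
  have hconst : ∀ z, 0 ≤ z → u z = u x := by
    intro z hz
    by_cases hxz : IntervalIntegrable (fun t => (A t).mulVec (u t)) volume x z
    · rw [← heq hx hy hxy]
      exact (heq hz hy fun hzy => hxy (hxz.trans hzy)).symm
    · exact heq hx hz hxz
  refine hxy (IntervalIntegrable.congr (f := fun t => (A t).mulVec (u x)) (fun t ht => ?_)
    (intervalIntegrable_of_eval fun i =>
      intervalIntegrable_mulVec (u := fun _ => u x) (hA x y hx hy) continuousOn_const i))
  simp only [hconst t ((le_min hx hy).trans (Set.uIoc_subset_uIcc ht).1)]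

theorem continuousOn (hu : IsIntegralSolution A u) (hA : EntriesLocallyIntegrable A) :
    ContinuousOn u (Set.Ici 0) := by
  have h := continuousOn_primitive_Ici (fun x y hx hy => hu.intervalIntegrable hA hx hy) le_rfl
  exact (continuousOn_const.add h).congr fun y hy => hu 0 y le_rfl hy

theorem apply_eq_add (hu : IsIntegralSolution A u) (hA : EntriesLocallyIntegrable A)
    {x y : ℝ} (hx : 0 ≤ x) (hy : 0 ≤ y) (i : Fin 2) :
    u y i = u x i + ∫ t in x..y, (A t).mulVec (u t) i := by
  have h := congrFun (hu x y hx hy) i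
  rw [Pi.add_apply] at h
  rw [h]
  congr 1
  exact ((ContinuousLinearMap.proj (R := ℂ) (φ := fun _ : Fin 2 => ℂ) i).intervalIntegral_comp_comm
    (hu.intervalIntegrable hA hx hy)).symm

/-- A solution vanishing at one point vanishes everywhere. -/
theorem eq_zero_of_apply_eq_zero (hu : IsIntegralSolution A u) (hA : EntriesLocallyIntegrable A)
    {x₀ : ℝ} (hx₀ : 0 ≤ x₀) (h0 : u x₀ = 0) : ∀ y, 0 ≤ y → u y = 0 := by
  have hcont := hu.continuousOn hA
  have hN : ∀ x y : ℝ, 0 ≤ x → 0 ≤ y → IntervalIntegrable (fun t => entryNorm (A t)) volume x y :=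
    fun x y hx hy => intervalIntegrable_entryNorm (hA x y hx hy)
  let Z : Set (Set.Ici (0 : ℝ)) := {t | u t = 0}
  have hclosed : IsClosed Z :=
    isClosed_singleton.preimage (continuousOn_iff_continuous_domRestrict.1 hcont)
  have hopen : IsOpen Z := by
    rw [isOpen_iff_mem_nhds]
    rintro ⟨t, ht⟩ htZ
    have ht : 0 ≤ t := ht
    have htZ : u t = 0 := htZ
    have hF : ∀ᶠ y in 𝓝[Set.Ici 0] t, |∫ s in t..y, entryNorm (A s)| < 1 / 2 := by
      have := (continuousOn_primitive_Ici hN ht t ht).abs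
      refine this.eventually_lt_const ?_
      simp
    have hsmall := (eventually_nhds_subtype_iff (Set.Ici 0) ⟨t, ht⟩ _).2 hF
    filter_upwards [hsmall] with ⟨y, hy⟩ hyF
    have hy : 0 ≤ y := hy
    have hsub : Set.uIcc t y ⊆ Set.Ici 0 := fun z hz => (le_min ht hy).trans hz.1
    have key := le_two_mul_of_le_add_abs_integral (x := t) (y := y) (c := 0)
      (N := fun s => entryNorm (A s)) (m := fun s => ‖u s‖)
      (fun s => entryNorm_nonneg _) (fun s => norm_nonneg _) (hN t y ht hy) hyF.le
      (hcont.norm.mono hsub) (fun r hr => by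
        have hsub' : Set.uIcc t r ⊆ Set.Ici 0 := (Set.uIcc_subset_uIcc_left hr).trans hsub
        rw [hu t r ht (hsub hr), htZ, zero_add, zero_add]
        refine intervalIntegral.norm_integral_le_abs_of_norm_le
          (Eventually.of_forall fun s => norm_mulVec_le _ _) ?_
        exact (hN t r ht (hsub hr)).mul_continuousOn (hcont.norm.mono hsub')) y (by simp)
    have : ‖u y‖ ≤ 0 := by simpa using key
    exact norm_le_zero_iff.1 this
  have : PreconnectedSpace (Set.Ici (0 : ℝ)) := Subtype.preconnectedSpace isPreconnected_Ici
  rcases isClopen_iff.1 ⟨hclosed, hopen⟩ with hZ | hZ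
  · have : (⟨x₀, hx₀⟩ : Set.Ici (0 : ℝ)) ∈ Z := h0
    simp [hZ] at this
  · intro y hy
    have : (⟨y, hy⟩ : Set.Ici (0 : ℝ)) ∈ Z := hZ ▸ Set.mem_univ _
    exact this

theorem add (hu : IsIntegralSolution A u) (hw : IsIntegralSolution A w)
    (hA : EntriesLocallyIntegrable A) : IsIntegralSolution A (u + w) := by
  intro x y hx hy
  simp only [Pi.add_apply, Matrix.mulVec_add]
  rw [intervalIntegral.integral_add (hu.intervalIntegrable hA hx hy)
    (hw.intervalIntegrable hA hx hy), hu x y hx hy, hw x y hx hy]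
  abel

theorem smul (hu : IsIntegralSolution A u) (c : ℂ) : IsIntegralSolution A (c • u) := by
  intro x y hx hy
  simp only [Pi.smul_apply, Matrix.mulVec_smul]
  rw [intervalIntegral.integral_smul, hu x y hx hy, smul_add]

end IsIntegralSolution

/-- The space of integral solutions of `u' = A u`. -/
def integralSolutions (A : ℝ → Matrix (Fin 2) (Fin 2) ℂ) (hA : EntriesLocallyIntegrable A) :
    Submodule ℂ (ℝ → Fin 2 → ℂ) where
  carrier := {u | IsIntegralSolution A u}
  add_mem' hu hw := hu.add hw hA
  zero_mem' := fun x y _ _ => by simp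
  smul_mem' c _ hu := hu.smul c

/-- Evaluation of a solution at a point. -/
def evalSolution {A : ℝ → Matrix (Fin 2) (Fin 2) ℂ} (hA : EntriesLocallyIntegrable A) (x : ℝ) :
    integralSolutions A hA →ₗ[ℂ] (Fin 2 → ℂ) :=
  (LinearMap.proj x).comp (integralSolutions A hA).subtype

theorem ker_evalSolution_eq {A : ℝ → Matrix (Fin 2) (Fin 2) ℂ} (hA : EntriesLocallyIntegrable A)
    {x y : ℝ} (hx : 0 ≤ x) (hy : 0 ≤ y) :
    LinearMap.ker (evalSolution hA x) = LinearMap.ker (evalSolution hA y) := by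
  ext ⟨u, hu⟩
  exact ⟨fun h => IsIntegralSolution.eq_zero_of_apply_eq_zero hu hA hx h y hy,
    fun h => IsIntegralSolution.eq_zero_of_apply_eq_zero hu hA hy h x hx⟩

/-- If every vector is an initial value at `x`, then every vector is an initial value at `y`. -/
theorem range_evalSolution_eq_top {A : ℝ → Matrix (Fin 2) (Fin 2) ℂ}
    (hA : EntriesLocallyIntegrable A) {x y : ℝ} (hx : 0 ≤ x) (hy : 0 ≤ y)
    (h : LinearMap.range (evalSolution hA x) = ⊤) : LinearMap.range (evalSolution hA y) = ⊤ := by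
  apply Submodule.eq_top_of_finrank_eq
  rw [← (evalSolution hA y).quotKerEquivRange.finrank_eq, ← ker_evalSolution_eq hA hx hy,
    (evalSolution hA x).quotKerEquivRange.finrank_eq, h, finrank_top]

/-- The coefficient matrix `(β / t^γ) diag(1, -1) + R t`. -/
noncomputable def coefficient (β γ : ℝ) (R : ℝ → Matrix (Fin 2) (Fin 2) ℂ) (t : ℝ) :
    Matrix (Fin 2) (Fin 2) ℂ :=
  ((β / t ^ γ : ℝ) : ℂ) • (!![1,0;0,-1] : Matrix (Fin 2) (Fin 2) ℂ) + R t

/-- The solution divided by the growth factor `exp (phase β γ x)`. -/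
noncomputable def rescaled (β γ : ℝ) (u : ℝ → Fin 2 → ℂ) (x : ℝ) : Fin 2 → ℂ :=
  ((Real.exp (-phase β γ x) : ℝ) : ℂ) • u x

theorem entriesLocallyIntegrable_of_integrableOn {R : ℝ → Matrix (Fin 2) (Fin 2) ℂ}
    (hR : ∀ i j, IntegrableOn (fun x => R x i j) (Set.Ioi 0)) : EntriesLocallyIntegrable R := by
  intro x y hx hy i j
  rw [intervalIntegrable_iff]
  exact (hR i j).mono_set fun t ht => (le_min hx hy).trans_lt ht.1

theorem entriesLocallyIntegrable_coefficient {β γ : ℝ} (hγ : γ < 1)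
    {R : ℝ → Matrix (Fin 2) (Fin 2) ℂ} (hR : EntriesLocallyIntegrable R) :
    EntriesLocallyIntegrable (coefficient β γ R) := by
  intro x y hx hy i j
  have h := intervalIntegrable_div_rpow (β := β) hγ hx hy
  have h' : IntervalIntegrable (fun t : ℝ => ((β / t ^ γ : ℝ) : ℂ)) volume x y :=
    ⟨h.1.ofReal, h.2.ofReal⟩
  simp only [coefficient, Matrix.add_apply, Matrix.smul_apply, smul_eq_mul]
  exact (h'.mul_const _).add (hR x y hx hy i j)

theorem coefficient_mulVec_zero (β γ : ℝ) (R : ℝ → Matrix (Fin 2) (Fin 2) ℂ) (t : ℝ)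
    (v : Fin 2 → ℂ) :
    (coefficient β γ R t).mulVec v 0 =
      ((1 * (β / t ^ γ) : ℝ) : ℂ) * v 0 + (R t).mulVec v 0 := by
  simp [coefficient, Matrix.mulVec, dotProduct]
  ring

theorem coefficient_mulVec_one (β γ : ℝ) (R : ℝ → Matrix (Fin 2) (Fin 2) ℂ) (t : ℝ)
    (v : Fin 2 → ℂ) :
    (coefficient β γ R t).mulVec v 1 =
      ((-1 * (β / t ^ γ) : ℝ) : ℂ) * v 1 + (R t).mulVec v 1 := by
  simp [coefficient, Matrix.mulVec, dotProduct]
  ring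

section Rescaled

variable {β γ : ℝ} {R : ℝ → Matrix (Fin 2) (Fin 2) ℂ} {u : ℝ → Fin 2 → ℂ}

theorem continuousOn_rescaled (hγ : γ < 1) (hR : EntriesLocallyIntegrable R)
    (hu : IsIntegralSolution (coefficient β γ R) u) :
    ContinuousOn (rescaled β γ u) (Set.Ici 0) := by
  have hc : Continuous fun t => ((Real.exp (-phase β γ t) : ℝ) : ℂ) := by
    have := continuous_phase (β := β) hγ
    fun_prop
  exact hc.continuousOn.smul (hu.continuousOn (entriesLocallyIntegrable_coefficient hγ hR))

theorem intervalIntegrable_entryNorm_mul_norm_rescaled (hγ : γ < 1)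
    (hR : EntriesLocallyIntegrable R) (hu : IsIntegralSolution (coefficient β γ R) u)
    {x y : ℝ} (hx : 0 ≤ x) (hy : 0 ≤ y) :
    IntervalIntegrable (fun t => entryNorm (R t) * ‖rescaled β γ u t‖) volume x y :=
  (intervalIntegrable_entryNorm (hR x y hx hy)).mul_continuousOn
    ((continuousOn_rescaled hγ hR hu).norm.mono fun _ hz => (le_min hx hy).trans hz.1)

theorem rescaled_zero_eq (hγ : γ < 1) (hR : EntriesLocallyIntegrable R)
    (hu : IsIntegralSolution (coefficient β γ R) u) {x y : ℝ} (hx : 0 ≤ x) (hy : 0 ≤ y) :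
    rescaled β γ u y 0 =
      rescaled β γ u x 0 + ∫ t in x..y, (R t).mulVec (rescaled β γ u t) 0 := by
  have hA := entriesLocallyIntegrable_coefficient (β := β) hγ hR
  have hsub : Set.uIcc x y ⊆ Set.Ici 0 := fun z hz => (le_min hx hy).trans hz.1
  have h := exp_phase_mul_sub_eq_integral (β := β) 1 hγ hx hy (W := fun t => u t 0)
    (r := fun t => (R t).mulVec (u t) 0) ?_ ?_
  · simp only [rescaled, Matrix.mulVec_smul, Pi.smul_apply, smul_eq_mul]
    simp only [one_mul] at h
    rw [← h]
    ring
  · simp only [← coefficient_mulVec_zero]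
    exact intervalIntegrable_mulVec (hA x y hx hy) ((hu.continuousOn hA).mono hsub) 0
  · intro z hz
    simp only [← coefficient_mulVec_zero]
    exact hu.apply_eq_add hA hx (hsub hz) 0

theorem norm_rescaled_one_le (hβ : 0 < β) (hγ : γ < 1) (hR : EntriesLocallyIntegrable R)
    (hu : IsIntegralSolution (coefficient β γ R) u) {x y : ℝ} (hx : 0 ≤ x) (hxy : x ≤ y) :
    ‖rescaled β γ u y 1‖ ≤ Real.exp (-(2 * (phase β γ y - phase β γ x))) * ‖rescaled β γ u x‖ +
      ∫ t in x..y, entryNorm (R t) * ‖rescaled β γ u t‖ := by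
  have hy : 0 ≤ y := hx.trans hxy
  have hA := entriesLocallyIntegrable_coefficient (β := β) hγ hR
  have hsub : Set.uIcc x y ⊆ Set.Ici 0 := fun z hz => (le_min hx hy).trans hz.1
  have h := exp_phase_mul_sub_eq_integral (β := β) (-1) hγ hx hy (W := fun t => u t 1)
    (r := fun t => (R t).mulVec (u t) 1) ?_ ?_
  · have hexp : ∀ t, ((Real.exp (-(-1 * phase β γ t)) : ℝ) : ℂ) =
        (Real.exp (2 * phase β γ t) : ℝ) * (Real.exp (-phase β γ t) : ℝ) := by
      intro t
      rw [← Complex.ofReal_mul, ← Real.exp_add]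
      congr 2
      ring
    have hcancel : ((Real.exp (-(2 * phase β γ y)) : ℝ) : ℂ) * (Real.exp (2 * phase β γ y) : ℝ)
        = 1 := by
      rw [← Complex.ofReal_mul, ← Real.exp_add]
      simp
    have hcomb : ∀ t, ((Real.exp (-(2 * phase β γ y)) : ℝ) : ℂ) *
        (Real.exp (2 * phase β γ t) : ℝ) =
        (Real.exp (-(2 * (phase β γ y - phase β γ t))) : ℝ) := by
      intro t
      rw [← Complex.ofReal_mul, ← Real.exp_add]
      congr 2
      ring
    simp only [hexp, mul_assoc] at h
    have hval : rescaled β γ u y 1 =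
        (Real.exp (-(2 * (phase β γ y - phase β γ x))) : ℝ) * rescaled β γ u x 1 +
        ∫ t in x..y, ((Real.exp (-(2 * (phase β γ y - phase β γ t))) : ℝ) : ℂ) *
          (R t).mulVec (rescaled β γ u t) 1 := by
      simp only [rescaled, Matrix.mulVec_smul, Pi.smul_apply, smul_eq_mul, ← hcomb, mul_assoc]
      rw [intervalIntegral.integral_const_mul, ← h]
      linear_combination (-((Real.exp (-phase β γ y) : ℝ) : ℂ) * u y 1) * hcancel
    rw [hval]
    refine (norm_add_le _ _).trans (add_le_add ?_ ?_)
    · rw [norm_mul, Complex.norm_real, Real.norm_of_nonneg (Real.exp_nonneg _)]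
      exact mul_le_mul_of_nonneg_left (norm_le_pi_norm _ 1) (Real.exp_nonneg _)
    · refine intervalIntegral.norm_integral_le_of_norm_le hxy (Eventually.of_forall fun t ht => ?_)
        (intervalIntegrable_entryNorm_mul_norm_rescaled hγ hR hu hx hy)
      rw [norm_mul, Complex.norm_real, Real.norm_of_nonneg (Real.exp_nonneg _)]
      have hmono : phase β γ t ≤ phase β γ y :=
        phase_monotoneOn hβ hγ (hx.trans ht.1.le) hy ht.2
      have h1 : Real.exp (-(2 * (phase β γ y - phase β γ t))) ≤ 1 :=
        Real.exp_le_one_iff.2 (by linarith)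
      calc _ ≤ 1 * ‖(R t).mulVec (rescaled β γ u t) 1‖ :=
            mul_le_mul_of_nonneg_right h1 (norm_nonneg _)
        _ = ‖(R t).mulVec (rescaled β γ u t) 1‖ := one_mul _
        _ ≤ ‖(R t).mulVec (rescaled β γ u t)‖ := norm_le_pi_norm _ 1
        _ ≤ _ := norm_mulVec_le _ _
  · simp only [← coefficient_mulVec_one]
    exact intervalIntegrable_mulVec (hA x y hx hy) ((hu.continuousOn hA).mono hsub) 1
  · intro z hz
    simp only [← coefficient_mulVec_one]
    exact hu.apply_eq_add hA hx (hsub hz) 1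

theorem norm_rescaled_zero_sub_le (hγ : γ < 1) (hR : EntriesLocallyIntegrable R)
    (hu : IsIntegralSolution (coefficient β γ R) u) {x y : ℝ} (hx : 0 ≤ x) (hxy : x ≤ y) :
    ‖rescaled β γ u y 0 - rescaled β γ u x 0‖ ≤
      ∫ t in x..y, entryNorm (R t) * ‖rescaled β γ u t‖ := by
  rw [rescaled_zero_eq hγ hR hu hx (hx.trans hxy), add_sub_cancel_left]
  exact intervalIntegral.norm_integral_le_of_norm_le hxy
    (Eventually.of_forall fun t _ => (norm_le_pi_norm _ 0).trans (norm_mulVec_le _ _))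
    (intervalIntegrable_entryNorm_mul_norm_rescaled hγ hR hu hx (hx.trans hxy))

theorem norm_rescaled_le (hβ : 0 < β) (hγ : γ < 1) (hR : EntriesLocallyIntegrable R)
    (hu : IsIntegralSolution (coefficient β γ R) u) {x y : ℝ} (hx : 0 ≤ x) (hxy : x ≤ y) :
    ‖rescaled β γ u y‖ ≤ ‖rescaled β γ u x‖ +
      ∫ t in x..y, entryNorm (R t) * ‖rescaled β γ u t‖ := by
  have hI : 0 ≤ ∫ t in x..y, entryNorm (R t) * ‖rescaled β γ u t‖ :=
    intervalIntegral.integral_nonneg hxy fun t _ =>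
      mul_nonneg (entryNorm_nonneg _) (norm_nonneg _)
  refine (pi_norm_le_iff_of_nonneg (by positivity)).2 (Fin.forall_fin_two.2 ⟨?_, ?_⟩)
  · have h1 := norm_rescaled_zero_sub_le hγ hR hu hx hxy
    have h2 := norm_le_norm_add_norm_sub' (rescaled β γ u y 0) (rescaled β γ u x 0)
    have h3 := norm_le_pi_norm (rescaled β γ u x) 0
    linarith
  · refine (norm_rescaled_one_le hβ hγ hR hu hx hxy).trans (add_le_add ?_ le_rfl)
    have hmono : phase β γ x ≤ phase β γ y := phase_monotoneOn hβ hγ hx (hx.trans hxy) hxy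
    exact mul_le_of_le_one_left (norm_nonneg _) (Real.exp_le_one_iff.2 (by linarith))

theorem norm_rescaled_le_two_mul (hβ : 0 < β) (hγ : γ < 1) (hR : EntriesLocallyIntegrable R)
    (hu : IsIntegralSolution (coefficient β γ R) u) {x y : ℝ} (hx : 0 ≤ x) (hxy : x ≤ y)
    (hsmall : ∫ t in x..y, entryNorm (R t) ≤ 1 / 2) :
    ‖rescaled β γ u y‖ ≤ 2 * ‖rescaled β γ u x‖ := by
  have hy : 0 ≤ y := hx.trans hxy
  refine le_two_mul_of_le_add_abs_integral (x := x) (y := y) (N := fun t => entryNorm (R t))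
    (m := fun t => ‖rescaled β γ u t‖) (fun t => entryNorm_nonneg _) (fun t => norm_nonneg _)
    (intervalIntegrable_entryNorm (hR x y hx hy)) ?_ ?_ ?_ y (by simp)
  · rwa [abs_of_nonneg (intervalIntegral.integral_nonneg hxy fun t _ => entryNorm_nonneg _)]
  · exact (continuousOn_rescaled hγ hR hu).norm.mono fun _ hz => (le_min hx hy).trans hz.1
  · intro r hr
    rw [Set.uIcc_of_le hxy] at hr
    exact (norm_rescaled_le hβ hγ hR hu hx hr.1).trans (add_le_add le_rfl (le_abs_self _))

end Rescaled

section Growth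

variable {β γ : ℝ} {R : ℝ → Matrix (Fin 2) (Fin 2) ℂ} {u : ℝ → Fin 2 → ℂ}

theorem exists_forall_integral_entryNorm_le
    (hR : ∀ i j, IntegrableOn (fun x => R x i j) (Set.Ioi 0)) {ε : ℝ} (hε : 0 < ε) :
    ∃ x₀, 0 ≤ x₀ ∧ ∀ x y, x₀ ≤ x → x ≤ y → ∫ t in x..y, entryNorm (R t) ≤ ε := by
  have hN : IntegrableOn (fun t => entryNorm (R t)) (Set.Ioi 0) := by
    simp only [entryNorm, Fin.sum_univ_two]
    exact ((hR 0 0).norm.add (hR 0 1).norm).add ((hR 1 0).norm.add (hR 1 1).norm)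
  have hNi : ∀ x y : ℝ, 0 ≤ x → 0 ≤ y → IntervalIntegrable (fun t => entryNorm (R t)) volume x y :=
    fun x y hx hy =>
      intervalIntegrable_entryNorm (entriesLocallyIntegrable_of_integrableOn hR x y hx hy)
  have hlim := intervalIntegral_tendsto_integral_Ioi 0 hN tendsto_id
  obtain ⟨T, hT⟩ := Metric.tendsto_atTop.1 hlim (ε / 2) (by linarith)
  refine ⟨max 0 T, le_max_left _ _, fun x y hx hxy => ?_⟩
  have hx0 : 0 ≤ x := (le_max_left _ _).trans hx
  have h1 := abs_lt.1 (hT x ((le_max_right _ _).trans hx))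
  have h2 := abs_lt.1 (hT y (((le_max_right _ _).trans hx).trans hxy))
  have h3 := intervalIntegral.integral_add_adjacent_intervals (hNi 0 x le_rfl hx0)
    (hNi x y hx0 (hx0.trans hxy))
  simp only [id] at h1 h2
  linarith [h1.1, h2.2]

theorem exists_forall_norm_rescaled_le (hβ : 0 < β) (hγ : γ < 1)
    (hR : ∀ i j, IntegrableOn (fun x => R x i j) (Set.Ioi 0))
    (hu : IsIntegralSolution (coefficient β γ R) u) :
    ∃ M, 0 ≤ M ∧ ∀ y, 0 ≤ y → ‖rescaled β γ u y‖ ≤ M := by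
  have hRl := entriesLocallyIntegrable_of_integrableOn hR
  obtain ⟨x₀, hx₀, htail⟩ := exists_forall_integral_entryNorm_le hR (ε := 1 / 2) (by norm_num)
  obtain ⟨C, hC⟩ := (isCompact_Icc (a := 0) (b := x₀)).exists_bound_of_continuousOn
    ((continuousOn_rescaled hγ hRl hu).mono Set.Icc_subset_Ici_self)
  have hC0 : 0 ≤ C := (norm_nonneg _).trans (hC x₀ ⟨hx₀, le_rfl⟩)
  refine ⟨2 * C, by linarith, fun y hy => ?_⟩
  rcases le_total y x₀ with h | h
  · linarith [hC y ⟨hy, h⟩]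
  · have := norm_rescaled_le_two_mul hβ hγ hRl hu hx₀ h (htail x₀ y le_rfl h)
    linarith [hC x₀ ⟨hx₀, le_rfl⟩]

theorem integrableOn_mulVec_rescaled (hβ : 0 < β) (hγ : γ < 1)
    (hR : ∀ i j, IntegrableOn (fun x => R x i j) (Set.Ioi 0))
    (hu : IsIntegralSolution (coefficient β γ R) u) (i : Fin 2) :
    IntegrableOn (fun t => (R t).mulVec (rescaled β γ u t) i) (Set.Ioi 0) := by
  have hRl := entriesLocallyIntegrable_of_integrableOn hR
  obtain ⟨M, -, hM⟩ := exists_forall_norm_rescaled_le hβ hγ hR hu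
  have hj : ∀ j, IntegrableOn (fun t => R t i j * rescaled β γ u t j) (Set.Ioi 0) := by
    intro j
    refine Integrable.mul_bdd (c := M) (hR i j) ?_ ?_
    · exact ((continuousOn_pi.1 (continuousOn_rescaled hγ hRl hu) j).mono
        Set.Ioi_subset_Ici_self).aestronglyMeasurable measurableSet_Ioi
    · filter_upwards [ae_restrict_mem measurableSet_Ioi] with t ht
      exact (norm_le_pi_norm _ j).trans (hM t (le_of_lt ht))
  simp only [Matrix.mulVec, dotProduct, Fin.sum_univ_two]
  exact (hj 0).add (hj 1)

/-- The coefficient of the growing mode in a solution. -/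
noncomputable def growthCoefficient (β γ : ℝ) (R : ℝ → Matrix (Fin 2) (Fin 2) ℂ)
    (u : ℝ → Fin 2 → ℂ) : ℂ :=
  u 0 0 + ∫ t in Set.Ioi (0 : ℝ), (R t).mulVec (rescaled β γ u t) 0

theorem rescaled_zero (hγ : γ < 1) : rescaled β γ u 0 = u 0 := by
  have : 1 - γ ≠ 0 := by linarith
  simp [rescaled, phase, Real.zero_rpow this]

theorem tendsto_rescaled_zero (hβ : 0 < β) (hγ : γ < 1)
    (hR : ∀ i j, IntegrableOn (fun x => R x i j) (Set.Ioi 0))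
    (hu : IsIntegralSolution (coefficient β γ R) u) :
    Tendsto (fun x => rescaled β γ u x 0) atTop (𝓝 (growthCoefficient β γ R u)) := by
  have hlim := intervalIntegral_tendsto_integral_Ioi 0
    (integrableOn_mulVec_rescaled hβ hγ hR hu 0) tendsto_id
  refine (hlim.const_add (u 0 0)).congr' ?_
  filter_upwards [eventually_ge_atTop 0] with y hy
  rw [rescaled_zero_eq hγ (entriesLocallyIntegrable_of_integrableOn hR) hu le_rfl hy,
    rescaled_zero hγ]
  rfl

theorem tendsto_rescaled_one (hβ : 0 < β) (hγ : γ < 1)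
    (hR : ∀ i j, IntegrableOn (fun x => R x i j) (Set.Ioi 0))
    (hu : IsIntegralSolution (coefficient β γ R) u) :
    Tendsto (fun x => rescaled β γ u x 1) atTop (𝓝 0) := by
  have hRl := entriesLocallyIntegrable_of_integrableOn hR
  obtain ⟨M, hM0, hM⟩ := exists_forall_norm_rescaled_le hβ hγ hR hu
  rw [Metric.tendsto_nhds]
  intro ε hε
  obtain ⟨x₀, hx₀, htail⟩ :=
    exists_forall_integral_entryNorm_le hR (ε := ε / (2 * (M + 1))) (by positivity)
  have hdecay : Tendsto (fun y => Real.exp (-(2 * (phase β γ y - phase β γ x₀))) *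
      ‖rescaled β γ u x₀‖) atTop (𝓝 0) := by
    rw [← zero_mul ‖rescaled β γ u x₀‖]
    refine Tendsto.mul_const _ (Real.tendsto_exp_neg_atTop_nhds_zero.comp ?_)
    exact (tendsto_atTop_add_const_right _ (-phase β γ x₀) (tendsto_phase hβ hγ)).const_mul_atTop
      two_pos
  filter_upwards [hdecay.eventually_lt_const (half_pos hε), eventually_ge_atTop x₀] with y hy hxy
  rw [dist_zero_right]
  have hint : ∫ t in x₀..y, entryNorm (R t) * ‖rescaled β γ u t‖ ≤ ε / (2 * (M + 1)) * M := by
    refine le_trans ?_ (mul_le_mul_of_nonneg_right (htail x₀ y le_rfl hxy) hM0)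
    rw [← intervalIntegral.integral_mul_const]
    refine intervalIntegral.integral_mono_on hxy
      (intervalIntegrable_entryNorm_mul_norm_rescaled hγ hRl hu hx₀ (hx₀.trans hxy))
      ((intervalIntegrable_entryNorm (hRl x₀ y hx₀ (hx₀.trans hxy))).mul_const _) fun t ht => ?_
    exact mul_le_mul_of_nonneg_left (hM t (hx₀.trans ht.1)) (entryNorm_nonneg _)
  have hle : ε / (2 * (M + 1)) * M ≤ ε / 2 := by
    rw [div_mul_eq_mul_div, div_le_div_iff₀ (by positivity) two_pos]
    nlinarith
  linarith [norm_rescaled_one_le hβ hγ hRl hu hx₀ hxy]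

theorem tendsto_rescaled (hβ : 0 < β) (hγ : γ < 1)
    (hR : ∀ i j, IntegrableOn (fun x => R x i j) (Set.Ioi 0))
    (hu : IsIntegralSolution (coefficient β γ R) u) :
    Tendsto (rescaled β γ u) atTop (𝓝 (growthCoefficient β γ R u • ![1, 0])) := by
  rw [tendsto_pi_nhds]
  refine Fin.forall_fin_two.2 ⟨?_, ?_⟩
  · simpa using tendsto_rescaled_zero hβ hγ hR hu
  · simpa using tendsto_rescaled_one hβ hγ hR hu

/-- The coefficient of the growing mode as a linear functional on the solution space. -/
noncomputable def growthFunctional (hβ : 0 < β) (hγ : γ < 1)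
    (hR : ∀ i j, IntegrableOn (fun x => R x i j) (Set.Ioi 0))
    (hA : EntriesLocallyIntegrable (coefficient β γ R)) :
    integralSolutions (coefficient β γ R) hA →ₗ[ℂ] ℂ where
  toFun u := growthCoefficient β γ R u
  map_add' u w := by
    refine tendsto_nhds_unique (tendsto_rescaled_zero hβ hγ hR (u + w).2)
      (((tendsto_rescaled_zero hβ hγ hR u.2).add (tendsto_rescaled_zero hβ hγ hR w.2)).congr
        fun x => ?_)
    simp [rescaled, mul_add]
  map_smul' c u := by
    refine tendsto_nhds_unique (tendsto_rescaled_zero hβ hγ hR (c • u).2)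
      (((tendsto_rescaled_zero hβ hγ hR u.2).const_mul c).congr fun x => ?_)
    simp [rescaled, mul_left_comm]

/-- Beyond a point where the tail of `R` is small, a solution starting in the growing direction
has a nonzero growth coefficient. -/
theorem exists_forall_growthCoefficient_ne_zero (hβ : 0 < β) (hγ : γ < 1)
    (hR : ∀ i j, IntegrableOn (fun x => R x i j) (Set.Ioi 0)) :
    ∃ x₀, 0 ≤ x₀ ∧ ∀ u, IsIntegralSolution (coefficient β γ R) u → u x₀ = ![1, 0] →
      growthCoefficient β γ R u ≠ 0 := by
  have hRl := entriesLocallyIntegrable_of_integrableOn hR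
  obtain ⟨x₀, hx₀, htail⟩ := exists_forall_integral_entryNorm_le hR (ε := 1 / 4) (by norm_num)
  refine ⟨x₀, hx₀, fun u hu hux hzero => ?_⟩
  set m := Real.exp (-phase β γ x₀) with hm
  have hmpos : 0 < m := Real.exp_pos _
  have hv0 : ‖rescaled β γ u x₀ 0‖ = m := by
    simp [rescaled, hux, Complex.norm_exp, hm]
  have hv : ‖rescaled β γ u x₀‖ ≤ m := by
    refine (pi_norm_le_iff_of_nonneg hmpos.le).2 (Fin.forall_fin_two.2 ⟨hv0.le, ?_⟩)
    simp [rescaled, hux, hmpos.le]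
  have hclose : ∀ y, x₀ ≤ y → ‖rescaled β γ u y 0 - rescaled β γ u x₀ 0‖ ≤ m / 2 := by
    intro y hxy
    refine (norm_rescaled_zero_sub_le hγ hRl hu hx₀ hxy).trans ?_
    calc ∫ t in x₀..y, entryNorm (R t) * ‖rescaled β γ u t‖
        ≤ ∫ t in x₀..y, entryNorm (R t) * (2 * m) := by
          refine intervalIntegral.integral_mono_on hxy
            (intervalIntegrable_entryNorm_mul_norm_rescaled hγ hRl hu hx₀ (hx₀.trans hxy))
            ((intervalIntegrable_entryNorm (hRl x₀ y hx₀ (hx₀.trans hxy))).mul_const _)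
            fun t ht => mul_le_mul_of_nonneg_left ?_ (entryNorm_nonneg _)
          have := norm_rescaled_le_two_mul hβ hγ hRl hu hx₀ ht.1
            ((htail x₀ t le_rfl ht.1).trans (by norm_num))
          linarith
      _ ≤ 1 / 4 * (2 * m) := by
          rw [intervalIntegral.integral_mul_const]
          exact mul_le_mul_of_nonneg_right (htail x₀ y le_rfl hxy) (by positivity)
      _ = m / 2 := by ring
  have hlim := ((tendsto_rescaled_zero hβ hγ hR hu).sub_const (rescaled β γ u x₀ 0)).norm
  have hle := le_of_tendsto hlim ((eventually_ge_atTop x₀).mono hclose)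
  rw [hzero, zero_sub, norm_neg, hv0] at hle
  linarith

end Growth

/-- A functional vanishing on the kernel of `e` factors through `e` via a functional with
one-dimensional kernel, provided it is nonzero whenever `e` is surjective. -/
theorem exists_functional_comp_eq {V : Type*} [AddCommGroup V] [Module ℂ V]
    (e : V →ₗ[ℂ] (Fin 2 → ℂ)) (l : V →ₗ[ℂ] ℂ) (hker : LinearMap.ker e ≤ LinearMap.ker l)
    (hl : LinearMap.range e = ⊤ → l ≠ 0) :
    ∃ Φ : (Fin 2 → ℂ) →ₗ[ℂ] ℂ, Module.finrank ℂ (LinearMap.ker Φ) = 1 ∧ ∀ v, Φ (e v) = l v := by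
  have hdim : ∀ Φ : (Fin 2 → ℂ) →ₗ[ℂ] ℂ, Φ ≠ 0 → Module.finrank ℂ (LinearMap.ker Φ) = 1 := by
    intro Φ hΦ
    have := Module.Dual.finrank_ker_add_one_of_ne_zero hΦ
    rw [Module.finrank_fin_fun] at this
    omega
  have hmem : l ∈ LinearMap.range e.dualMap := by
    rw [LinearMap.range_dualMap_eq_dualAnnihilator_ker, Submodule.mem_dualAnnihilator]
    exact fun v hv => hker hv
  obtain ⟨Φ, hΦ⟩ := hmem
  by_cases h0 : l = 0
  · obtain ⟨Ψ, hΨ, hle⟩ := Submodule.exists_le_ker_of_lt_top (LinearMap.range e)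
      (lt_top_iff_ne_top.2 fun h => hl h h0)
    refine ⟨Ψ, hdim Ψ hΨ, fun v => ?_⟩
    rw [h0]
    exact hle ⟨v, rfl⟩
  · refine ⟨Φ, hdim Φ ?_, fun v => LinearMap.congr_fun hΦ v⟩
    rintro rfl
    exact h0 (by rw [← hΦ, map_zero])

/-- Every solution of the dichotomous system converges to a multiple of the growing
mode: there is a linear functional `Φ` on `ℂ²` with one-dimensional kernel such that
the solution with initial value `f` at `0` satisfies
`u(x) = exp(β x^{1−γ}/(1−γ))(Φ(f) e₊ + o(1))`, and `Φ` is given by the stated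
integral formula (first component of `f + ∫₀^∞ e^{−φ} R u`). -/
theorem growing_mode_functional (β γ : ℝ) (hβ : 0 < β) (hγ : γ ∈ Set.Ioo (1/2:ℝ) 1)
    (R : ℝ → Matrix (Fin 2) (Fin 2) ℂ)
    (hRmeas : ∀ i j, Measurable fun x => R x i j)
    (hRint : ∀ i j, IntegrableOn (fun x => R x i j) (Set.Ioi 0)) :
    ∃ Φ : (Fin 2 → ℂ) →ₗ[ℂ] ℂ, Module.finrank ℂ (LinearMap.ker Φ) = 1 ∧
      ∀ f : Fin 2 → ℂ, ∀ u : ℝ → (Fin 2 → ℂ),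
        u 0 = f →
        (∀ x y : ℝ, 0 ≤ x → 0 ≤ y →
          u y = u x + ∫ t in x..y,
            ((((β / t ^ γ : ℝ) : ℂ) • (!![1,0;0,-1] : Matrix (Fin 2) (Fin 2) ℂ) + R t)).mulVec (u t)) →
        (Tendsto (fun x => ((Real.exp (-(β * x ^ (1-γ) / (1-γ))) : ℝ) : ℂ) • u x)
            atTop (𝓝 (Φ f • ![1,0])) ∧
          Φ f = (f + ∫ x in Set.Ioi (0:ℝ),
            ((Real.exp (-(β * x ^ (1-γ) / (1-γ))) : ℝ) : ℂ) • (R x).mulVec (u x)) 0) := by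
  have hRl := entriesLocallyIntegrable_of_integrableOn hRint
  have hA := entriesLocallyIntegrable_coefficient (β := β) hγ.2 hRl
  obtain ⟨x₀, hx₀, hne⟩ := exists_forall_growthCoefficient_ne_zero hβ hγ.2 hRint
  have hle : LinearMap.ker (evalSolution hA 0) ≤
      LinearMap.ker (growthFunctional hβ hγ.2 hRint hA) := by
    rintro ⟨u, hu⟩ h0
    have hzero := IsIntegralSolution.eq_zero_of_apply_eq_zero hu hA le_rfl h0
    refine tendsto_nhds_unique (tendsto_rescaled_zero hβ hγ.2 hRint hu)
      (tendsto_const_nhds.congr' ?_)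
    filter_upwards [eventually_ge_atTop 0] with y hy
    simp [rescaled, hzero y hy]
  have hnonzero : LinearMap.range (evalSolution hA 0) = ⊤ →
      growthFunctional hβ hγ.2 hRint hA ≠ 0 := by
    intro htop hl
    have hmem : ![1, 0] ∈ LinearMap.range (evalSolution hA x₀) :=
      range_evalSolution_eq_top hA le_rfl hx₀ htop ▸ Submodule.mem_top
    obtain ⟨⟨w, hw⟩, hwx⟩ := hmem
    exact hne w hw hwx (LinearMap.congr_fun hl ⟨w, hw⟩)
  obtain ⟨Φ, hker, hΦ⟩ := exists_functional_comp_eq _ _ hle hnonzero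
  refine ⟨Φ, hker, ?_⟩
  rintro f u rfl hu
  have hu : IsIntegralSolution (coefficient β γ R) u := hu
  have hval : Φ (u 0) = growthCoefficient β γ R u := hΦ ⟨u, hu⟩
  refine ⟨hval ▸ tendsto_rescaled hβ hγ.2 hRint hu, ?_⟩
  have hint := integrableOn_mulVec_rescaled hβ hγ.2 hRint hu
  simp only [rescaled, Matrix.mulVec_smul] at hint
  rw [hval, Pi.add_apply, growthCoefficient]
  congr 1
  simp only [rescaled, Matrix.mulVec_smul]
  exact (eval_integral hint 0).symm
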